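/- Let V be a primitive linear subspace of the 3×3 matrices over F2 with upper rank 2. If V contains a matrix of rank 1, then V is equivalent to a linear subspace of J3(F2). -/

import Mathlib

/-!
The proof works with the underlying additively closed set `S` of matrices, and records in
`NonDegenerate S` what primitivity and upper rank `2` give: all matrices of `S` are singular, and
after no change of bases do all matrices of `S` have a zero last row or column, nor a rank `≤ 1`
submatrix formed by the first two columns or by the first two rows. These conditions are invariant
under equivalence and under transposition, and so is the conclusion.

Normalize the rank one matrix to `E₀₀`. Comparing the determinants of `M` and `M + E₀₀` shows that
the lower right `2 × 2` block of every `M ∈ S` is singular. A linear space of singular `2 × 2`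
matrices has a common left or a common right null vector (`exists_common_null`). Up to
transposition and a row operation, every matrix of `S` then has the form

  `[a b c; d e f; g 0 0]`,  with determinant `g * (b * f - c * e)`.

Write `N = [b c; e f]`. Non-degeneracy provides `M₂ ∈ S` with `g = 1` and `M₁ ∈ S` with `N`
invertible, hence `g = 0`. Over `F₂` the matrices `N(M₂)` and `N(M₁) + N(M₂)` are both singular, so
`N(M₁) = 1` and `N(M₂) = diag(1, 0)` can be assumed. Vanishing of the determinants of `M`, `M + M₁`,
`M + M₂`, `M + M₁ + M₂` now forces `b + f = g` and `c * e = 0` for every `M ∈ S`. By additivity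
`e` vanishes on all of `S` or `c` does, and a permutation of rows and columns leads into `J3`.
-/

open Matrix

/-- Two linear subspaces of `n × p` matrices over `K` are *equivalent* when one is obtained
from the other by multiplying on the left and on the right by fixed invertible matrices. -/
def MatEquiv (K : Type*) [Field K] {n p : ℕ}
    (V₁ V₂ : Submodule K (Matrix (Fin n) (Fin p) K)) : Prop :=
  ∃ (P : Matrix (Fin n) (Fin n) K) (Q : Matrix (Fin p) (Fin p) K),
    IsUnit P ∧ IsUnit Q ∧
      (V₂ : Set (Matrix (Fin n) (Fin p) K)) =
        (fun M => P * M * Q) '' (V₁ : Set (Matrix (Fin n) (Fin p) K))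

/-- A linear subspace of matrices is *reduced* when no nonzero vector is annihilated by every
matrix of the space, and the column spaces of the matrices of the space together span the
whole target space. -/
def Reduced (K : Type*) [Field K] {n p : ℕ}
    (V : Submodule K (Matrix (Fin n) (Fin p) K)) : Prop :=
  (∀ x : Fin p → K, (∀ M ∈ V, M.mulVec x = 0) → x = 0) ∧
  Submodule.span K {y : Fin n → K | ∃ M ∈ V, ∃ x : Fin p → K, M.mulVec x = y} = ⊤

/-- The *upper rank* of a linear subspace of matrices: the maximal rank of a matrix in it. -/
noncomputable def urk {K : Type*} [Field K] {n p : ℕ}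
    (V : Submodule K (Matrix (Fin n) (Fin p) K)) : ℕ :=
  sSup (Matrix.rank '' (V : Set (Matrix (Fin n) (Fin p) K)))

/-- The matrix obtained by deleting the last column. -/
def dropCol {K : Type*} [Field K] {n p : ℕ} (M : Matrix (Fin n) (Fin p) K) :
    Matrix (Fin n) (Fin (p - 1)) K :=
  M.submatrix id (Fin.castLE (Nat.sub_le p 1))

/-- The matrix obtained by deleting the last row. -/
def dropRow {K : Type*} [Field K] {n p : ℕ} (M : Matrix (Fin n) (Fin p) K) :
    Matrix (Fin (n - 1)) (Fin p) K :=
  M.submatrix (Fin.castLE (Nat.sub_le n 1)) id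

/-- A linear subspace of matrices (of upper rank `r = urk V`) is *semi-primitive* when it is
reduced and it is not equivalent to a subspace `T` such that the space obtained by deleting
the last column of each matrix of `T` has upper rank at most `r - 1`. -/
def SemiPrimitive (K : Type*) [Field K] {n p : ℕ}
    (V : Submodule K (Matrix (Fin n) (Fin p) K)) : Prop :=
  Reduced K V ∧
    ¬ ∃ T : Submodule K (Matrix (Fin n) (Fin p) K),
        MatEquiv K V T ∧ ∀ M ∈ T, (dropCol M).rank ≤ urk V - 1

/-- A linear subspace of matrices (of upper rank `r = urk V`) is *primitive* when it is
semi-primitive and it is not equivalent to a subspace `T` such that the space obtained by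
deleting the last row of each matrix of `T` has upper rank at most `r - 1`. -/
def Primitive (K : Type*) [Field K] {n p : ℕ}
    (V : Submodule K (Matrix (Fin n) (Fin p) K)) : Prop :=
  SemiPrimitive K V ∧
    ¬ ∃ T : Submodule K (Matrix (Fin n) (Fin p) K),
        MatEquiv K V T ∧ ∀ M ∈ T, (dropRow M).rank ≤ urk V - 1

/-- `J3(F2)`: the space of upper-triangular `3 × 3` matrices over `F2` with trace zero. -/
def J3 : Submodule (ZMod 2) (Matrix (Fin 3) (Fin 3) (ZMod 2)) where
  carrier := {M | M.trace = 0 ∧ ∀ i j : Fin 3, j < i → M i j = 0}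
  add_mem' := by
    rintro M N ⟨hM1, hM2⟩ ⟨hN1, hN2⟩
    refine ⟨by simp [Matrix.trace_add, hM1, hN1], ?_⟩
    intro i j h
    simp [Matrix.add_apply, hM2 i j h, hN2 i j h]
  zero_mem' := by
    refine ⟨by simp, ?_⟩
    intro i j h
    simp
  smul_mem' := by
    rintro c M ⟨hM1, hM2⟩
    refine ⟨by simp [Matrix.trace_smul, hM1], ?_⟩
    intro i j h
    simp [Matrix.smul_apply, hM2 i j h]

/-- The `3 × 3` matrices over the field with two elements. -/
abbrev Mat3 := Matrix (Fin 3) (Fin 3) (ZMod 2)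

/-- The properties of a primitive space of upper rank `2` used in the proof, for an additively
closed set of matrices. Rank `≤ 1` of the first two columns (or rows) is expressed as a
factorization `u i * v j`. -/
structure NonDegenerate (S : Set Mat3) : Prop where
  add : ∀ A ∈ S, ∀ B ∈ S, A + B ∈ S
  det : ∀ A ∈ S, A.det = 0
  row : ∀ P Q : Mat3, IsUnit P → IsUnit Q → ∃ M ∈ S, ∃ j, (P * M * Q) 2 j ≠ 0
  col : ∀ P Q : Mat3, IsUnit P → IsUnit Q → ∃ M ∈ S, ∃ i, (P * M * Q) i 2 ≠ 0
  cols : ∀ P Q : Mat3, IsUnit P → IsUnit Q → ∃ M ∈ S, ¬ ∃ (u : Fin 3 → ZMod 2)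
    (v : Fin 2 → ZMod 2), ∀ i (j : Fin 2), (P * M * Q) i j.castSucc = u i * v j
  rows : ∀ P Q : Mat3, IsUnit P → IsUnit Q → ∃ M ∈ S, ¬ ∃ (u : Fin 2 → ZMod 2)
    (v : Fin 3 → ZMod 2), ∀ (i : Fin 2) j, (P * M * Q) i.castSucc j = u i * v j

/-- Some change of bases carries `S` into `J3`. -/
def IntoJ3 (S : Set Mat3) : Prop :=
  ∃ P Q : Mat3, IsUnit P ∧ IsUnit Q ∧ ∀ M ∈ S, P * M * Q ∈ J3

/-! ### Invariance under equivalence and transposition -/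

lemma NonDegenerate.equiv {S : Set Mat3} (h : NonDegenerate S) {P Q : Mat3} (hP : IsUnit P)
    (hQ : IsUnit Q) : NonDegenerate ((fun M => P * M * Q) '' S) where
  add := by
    rintro _ ⟨A, hA, rfl⟩ _ ⟨B, hB, rfl⟩
    exact ⟨A + B, h.add A hA B hB, by simp [Matrix.mul_add, Matrix.add_mul]⟩
  det := by
    rintro _ ⟨A, hA, rfl⟩
    simp [h.det A hA]
  row := by
    intro P' Q' hP' hQ'
    obtain ⟨M, hM, hh⟩ := h.row (P' * P) (Q * Q') (hP'.mul hP) (hQ.mul hQ')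
    exact ⟨_, ⟨M, hM, rfl⟩, by simpa only [Matrix.mul_assoc] using hh⟩
  col := by
    intro P' Q' hP' hQ'
    obtain ⟨M, hM, hh⟩ := h.col (P' * P) (Q * Q') (hP'.mul hP) (hQ.mul hQ')
    exact ⟨_, ⟨M, hM, rfl⟩, by simpa only [Matrix.mul_assoc] using hh⟩
  cols := by
    intro P' Q' hP' hQ'
    obtain ⟨M, hM, hh⟩ := h.cols (P' * P) (Q * Q') (hP'.mul hP) (hQ.mul hQ')
    exact ⟨_, ⟨M, hM, rfl⟩, by simpa only [Matrix.mul_assoc] using hh⟩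
  rows := by
    intro P' Q' hP' hQ'
    obtain ⟨M, hM, hh⟩ := h.rows (P' * P) (Q * Q') (hP'.mul hP) (hQ.mul hQ')
    exact ⟨_, ⟨M, hM, rfl⟩, by simpa only [Matrix.mul_assoc] using hh⟩

lemma transpose_conj (P M Q : Mat3) : P * Mᵀ * Q = (Qᵀ * M * Pᵀ)ᵀ := by
  simp [Matrix.transpose_mul, Matrix.mul_assoc]

lemma isUnit_transpose_mat {P : Mat3} (hP : IsUnit P) : IsUnit Pᵀ := by
  rw [Matrix.isUnit_iff_isUnit_det] at *
  simpa using hP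

lemma NonDegenerate.transpose {S : Set Mat3} (h : NonDegenerate S) :
    NonDegenerate (Matrix.transpose '' S) where
  add := by
    rintro _ ⟨A, hA, rfl⟩ _ ⟨B, hB, rfl⟩
    exact ⟨A + B, h.add A hA B hB, by simp⟩
  det := by
    rintro _ ⟨A, hA, rfl⟩
    simp [h.det A hA]
  row := by
    intro P Q hP hQ
    obtain ⟨M, hM, hh⟩ := h.col Qᵀ Pᵀ (isUnit_transpose_mat hQ) (isUnit_transpose_mat hP)
    exact ⟨_, ⟨M, hM, rfl⟩, by rw [transpose_conj]; exact hh⟩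
  col := by
    intro P Q hP hQ
    obtain ⟨M, hM, hh⟩ := h.row Qᵀ Pᵀ (isUnit_transpose_mat hQ) (isUnit_transpose_mat hP)
    exact ⟨_, ⟨M, hM, rfl⟩, by rw [transpose_conj]; exact hh⟩
  cols := by
    intro P Q hP hQ
    obtain ⟨M, hM, hh⟩ := h.rows Qᵀ Pᵀ (isUnit_transpose_mat hQ) (isUnit_transpose_mat hP)
    refine ⟨_, ⟨M, hM, rfl⟩, ?_⟩
    rintro ⟨u, v, huv⟩
    rw [transpose_conj] at huv
    exact hh ⟨v, u, fun i j => by rw [mul_comm]; exact huv j i⟩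
  rows := by
    intro P Q hP hQ
    obtain ⟨M, hM, hh⟩ := h.cols Qᵀ Pᵀ (isUnit_transpose_mat hQ) (isUnit_transpose_mat hP)
    refine ⟨_, ⟨M, hM, rfl⟩, ?_⟩
    rintro ⟨u, v, huv⟩
    rw [transpose_conj] at huv
    exact hh ⟨v, u, fun i j => by rw [mul_comm]; exact huv j i⟩

lemma IntoJ3.of_equiv {S : Set Mat3} {P Q : Mat3} (hP : IsUnit P) (hQ : IsUnit Q)
    (h : IntoJ3 ((fun M => P * M * Q) '' S)) : IntoJ3 S := by
  obtain ⟨P', Q', hP', hQ', hh⟩ := h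
  refine ⟨P' * P, Q * Q', hP'.mul hP, hQ.mul hQ', fun M hM => ?_⟩
  simpa only [Matrix.mul_assoc] using hh _ ⟨M, hM, rfl⟩

lemma mem_J3_iff (M : Mat3) : M ∈ J3 ↔
    M 0 0 + M 1 1 + M 2 2 = 0 ∧ M 1 0 = 0 ∧ M 2 0 = 0 ∧ M 2 1 = 0 := by
  change (M.trace = 0 ∧ ∀ i j : Fin 3, j < i → M i j = 0) ↔ _
  rw [Matrix.trace_fin_three]
  constructor
  · rintro ⟨h, h'⟩
    exact ⟨h, h' _ _ (by decide), h' _ _ (by decide), h' _ _ (by decide)⟩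
  · rintro ⟨h, h1, h2, h3⟩
    refine ⟨h, fun i j hij => ?_⟩
    fin_cases i <;> fin_cases j <;> first | exact absurd hij (by decide) | assumption

lemma isUnit_of_det {P : Mat3} (h : P.det = 1) : IsUnit P := by
  rw [Matrix.isUnit_iff_isUnit_det, h]
  exact isUnit_one

/-- `J3` is stable under transposition followed by reversal of the order of rows and columns. -/
lemma IntoJ3.of_transpose {S : Set Mat3} (h : IntoJ3 (Matrix.transpose '' S)) : IntoJ3 S := by
  obtain ⟨P, Q, hP, hQ, hh⟩ := h
  have hw : IsUnit (!![0, 0, 1; 0, 1, 0; 1, 0, 0] : Mat3) := isUnit_of_det (by decide)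
  refine ⟨!![0, 0, 1; 0, 1, 0; 1, 0, 0] * Qᵀ, Pᵀ * !![0, 0, 1; 0, 1, 0; 1, 0, 0],
    hw.mul (isUnit_transpose_mat hQ), (isUnit_transpose_mat hP).mul hw, fun M hM => ?_⟩
  have := hh _ ⟨M, hM, rfl⟩
  rw [transpose_conj] at this
  have e : !![0, 0, 1; 0, 1, 0; 1, 0, 0] * Qᵀ * M * (Pᵀ * !![0, 0, 1; 0, 1, 0; 1, 0, 0])
      = !![0, 0, 1; 0, 1, 0; 1, 0, 0] * (Qᵀ * M * Pᵀ) * !![0, 0, 1; 0, 1, 0; 1, 0, 0] := by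
    simp only [Matrix.mul_assoc]
  rw [e]
  generalize Qᵀ * M * Pᵀ = X at *
  rw [mem_J3_iff] at *
  obtain ⟨h0, h1, h2, h3⟩ := this
  simp [Matrix.mul_apply, Matrix.vecMul, dotProduct, Fin.sum_univ_three]
  simp only [Matrix.transpose_apply] at h0
  exact ⟨by linear_combination h0, h3, h2, h1⟩

/-! ### Facts about the field with two elements -/

/-- If at each point of an additively closed set one of two additive maps vanishes, then one of them
vanishes on the whole set (a group is not the union of two proper subgroups). -/
lemma forall_or_of_pointwise {A B : Type*} [AddMonoid A] [AddMonoid B] {S : Set Mat3}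
    (hadd : ∀ X ∈ S, ∀ Y ∈ S, X + Y ∈ S) (f : Mat3 →+ A) (g : Mat3 →+ B)
    (h : ∀ X ∈ S, f X = 0 ∨ g X = 0) : (∀ X ∈ S, f X = 0) ∨ (∀ X ∈ S, g X = 0) := by
  by_contra! hc
  obtain ⟨⟨X, hX, hfX⟩, Y, hY, hgY⟩ := hc
  have hgX := (h X hX).resolve_left hfX
  have hfY := (h Y hY).resolve_right hgY
  rcases h _ (hadd X hX Y hY) with h | h
  · rw [map_add, hfY, add_zero] at h
    exact hfX h
  · rw [map_add, hgX, zero_add] at h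
    exact hgY h

set_option synthInstance.maxHeartbeats 400000 in
set_option synthInstance.maxSize 1000 in
/-- For a nonzero singular `2 × 2` matrix `[a b; c d]` there are nonzero `(r, s)` and `(t, u)`
(namely its left and right null vectors) such that every singular `[x y; z w]` whose sum with
`[a b; c d]` is singular has `(r, s)` as a left null vector or `(t, u)` as a right null vector. -/
lemma exists_null_vectors : ∀ a b c d : ZMod 2, a * d - b * c = 0 →
    (a, b, c, d) ≠ (0, 0, 0, 0) →
    ∃ r s t u : ZMod 2, ((r, s) ≠ (0, 0) ∧ (t, u) ≠ (0, 0)) ∧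
      ∀ x y z w : ZMod 2, x * w - y * z = 0 → (a + x) * (d + w) - (b + y) * (c + z) = 0 →
        (r * x + s * z, r * y + s * w) = (0, 0) ∨ (t * x + u * y, t * z + u * w) = (0, 0) := by
  decide +kernel

/-- If `N₁ = [a b; c d]` is invertible while `N₂ = [x y; z w]` and `N₁ + N₂` are singular, then
some invertible `R = [p q; r s]` satisfies `N₂ * R = N₁ * R * diag(1, 0)`: its columns are null
vectors of `N₁ - N₂` and of `N₂`. Then `(N₁ * R)⁻¹ * N₁ * R = 1` and
`(N₁ * R)⁻¹ * N₂ * R = diag(1, 0)`. -/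
lemma exists_simultaneous_normal_form : ∀ a b c d x y z w : ZMod 2, a * d - b * c ≠ 0 →
    x * w - y * z = 0 → (a + x) * (d + w) - (b + y) * (c + z) = 0 →
    ∃ p q r s : ZMod 2, p * s - q * r = 1 ∧
      x * p + y * r = a * p + b * r ∧ z * p + w * r = c * p + d * r ∧
      x * q + y * s = 0 ∧ z * q + w * s = 0 := by
  decide +kernel

/-- The entry identities forced by vanishing of `g * (b * f - c * e)` at `M`, `M + M₁`, `M + M₂`
and `M + M₁ + M₂`. -/
lemma entries_of_det : ∀ b c e f g : ZMod 2, g * (b * f - c * e) = 0 →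
    g * ((b + 1) * (f + 1) - c * e) = 0 → (g + 1) * ((b + 1) * f - c * e) = 0 →
    (g + 1) * (b * (f + 1) - c * e) = 0 → b + f + g = 0 ∧ (e = 0 ∨ c = 0) := by
  decide +kernel

lemma zmod_two_eq_one : ∀ {x : ZMod 2}, x ≠ 0 → x = 1 := by decide

/-! ### The final normal form -/

/-- The case where the last row and the `2 × 2` block of the upper right corner are normalized. -/
lemma intoJ3_of_normalized {S : Set Mat3} (h : NonDegenerate S)
    (h21 : ∀ M ∈ S, M 2 1 = 0) (h22 : ∀ M ∈ S, M 2 2 = 0) {M₁ M₂ : Mat3}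
    (hM₁ : M₁ ∈ S) (hM₂ : M₂ ∈ S) (hg₁ : M₁ 2 0 = 0) (hg₂ : M₂ 2 0 = 1)
    (a1 : M₁ 0 1 = 1) (a2 : M₁ 0 2 = 0) (a3 : M₁ 1 1 = 0) (a4 : M₁ 1 2 = 1)
    (b1 : M₂ 0 1 = 1) (b2 : M₂ 0 2 = 0) (b3 : M₂ 1 1 = 0) (b4 : M₂ 1 2 = 0) : IntoJ3 S := by
  have hdet : ∀ M ∈ S, M 2 0 * (M 0 1 * M 1 2 - M 0 2 * M 1 1) = 0 := by
    intro M hM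
    have := h.det M hM
    rw [Matrix.det_fin_three, h21 M hM, h22 M hM] at this
    linear_combination this
  have key : ∀ M ∈ S, M 0 1 + M 1 2 + M 2 0 = 0 ∧ (M 1 1 = 0 ∨ M 0 2 = 0) := by
    intro M hM
    have h0 := hdet M hM
    have h1 := hdet _ (h.add M hM _ hM₁)
    have h2 := hdet _ (h.add M hM _ hM₂)
    have h3 := hdet _ (h.add _ (h.add M hM _ hM₁) _ hM₂)
    simp only [Matrix.add_apply, hg₁, hg₂, a1, a2, a3, a4, b1, b2, b3, b4, add_zero] at h1 h2 h3
    have two : (1 + 1 : ZMod 2) = 0 := by decide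
    rw [add_assoc (M 0 1), two, add_zero] at h3
    exact entries_of_det _ _ _ _ _ h0 h1 h2 h3
  rcases forall_or_of_pointwise h.add (Matrix.entryAddMonoidHom (ZMod 2) (1 : Fin 3) (1 : Fin 3))
    (Matrix.entryAddMonoidHom (ZMod 2) (0 : Fin 3) (2 : Fin 3)) (fun M hM => (key M hM).2)
    with hz | hz
  · refine ⟨1, !![0, 0, 1; 1, 0, 0; 0, 1, 0], isUnit_one, isUnit_of_det (by decide),
      fun M hM => ?_⟩
    have hz' : M 1 1 = 0 := hz M hM
    rw [mem_J3_iff]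
    simp [Matrix.mul_apply, Fin.sum_univ_three, h21 M hM, h22 M hM, hz', (key M hM).1]
  · refine ⟨!![0, 1, 0; 1, 0, 0; 0, 0, 1], !![0, 0, 1; 0, 1, 0; 1, 0, 0],
      isUnit_of_det (by decide), isUnit_of_det (by decide), fun M hM => ?_⟩
    have hz' : M 0 2 = 0 := hz M hM
    rw [mem_J3_iff]
    simp [Matrix.mul_apply, Matrix.vecMul, dotProduct, Fin.sum_univ_three, h21 M hM, h22 M hM,
      hz']
    rw [← (key M hM).1]
    ring

lemma rank_one_of_minor : ∀ b c e f : ZMod 2, b * f - c * e = 0 →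
    ∃ s t x y : ZMod 2, b = s * x ∧ c = s * y ∧ e = t * x ∧ f = t * y := by
  decide +kernel

/-- The case where all matrices are of the form `[a b c; d e f; g 0 0]`. -/
lemma intoJ3_of_last_row {S : Set Mat3} (h : NonDegenerate S)
    (h21 : ∀ M ∈ S, M 2 1 = 0) (h22 : ∀ M ∈ S, M 2 2 = 0) : IntoJ3 S := by
  have hdet : ∀ M ∈ S, M 2 0 * (M 0 1 * M 1 2 - M 0 2 * M 1 1) = 0 := by
    intro M hM
    have := h.det M hM
    rw [Matrix.det_fin_three, h21 M hM, h22 M hM] at this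
    linear_combination this
  obtain ⟨M₂, hM₂, hg₂⟩ : ∃ M ∈ S, M 2 0 = 1 := by
    obtain ⟨M, hM, j, hj⟩ := h.row 1 1 isUnit_one isUnit_one
    refine ⟨M, hM, zmod_two_eq_one ?_⟩
    rw [one_mul, mul_one] at hj
    fin_cases j
    · exact hj
    · exact absurd (h21 M hM) hj
    · exact absurd (h22 M hM) hj
  obtain ⟨M₁, hM₁, hN₁⟩ : ∃ M ∈ S, M 0 1 * M 1 2 - M 0 2 * M 1 1 ≠ 0 := by
    obtain ⟨M, hM, hh⟩ := h.cols 1 !![0, 0, 1; 1, 0, 0; 0, 1, 0] isUnit_one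
      (isUnit_of_det (by decide))
    refine ⟨M, hM, fun h0 => hh ?_⟩
    obtain ⟨s, t, x, y, e1, e2, e3, e4⟩ := rank_one_of_minor _ _ _ _ h0
    refine ⟨![s, t, 0], ![x, y], fun i j => ?_⟩
    fin_cases i <;> fin_cases j <;>
      simp [Matrix.mul_apply, Fin.sum_univ_three, h21 M hM, h22 M hM, e1, e2, e3, e4]
  have hg₁ : M₁ 2 0 = 0 := (mul_eq_zero.mp (hdet M₁ hM₁)).resolve_right hN₁
  have hN₂ := hdet M₂ hM₂
  have hN₁₂ := hdet _ (h.add _ hM₁ _ hM₂)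
  simp only [Matrix.add_apply, hg₁, hg₂, zero_add, one_mul] at hN₂ hN₁₂
  obtain ⟨p, q, r, s, e1, e2, e3, e4, e5⟩ := exists_simultaneous_normal_form
    (M₁ 0 1) (M₁ 0 2) (M₁ 1 1) (M₁ 1 2) (M₂ 0 1) (M₂ 0 2) (M₂ 1 1) (M₂ 1 2) hN₁ hN₂ hN₁₂
  have hN₁' := zmod_two_eq_one hN₁
  -- The left factor is the inverse of `N₁ * [p q; r s]`, a matrix of determinant one.
  let P : Mat3 := !![M₁ 1 1 * q + M₁ 1 2 * s, -(M₁ 0 1 * q + M₁ 0 2 * s), 0;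
    -(M₁ 1 1 * p + M₁ 1 2 * r), M₁ 0 1 * p + M₁ 0 2 * r, 0; 0, 0, 1]
  let Q : Mat3 := !![1, 0, 0; 0, p, q; 0, r, s]
  have hP : IsUnit P := isUnit_of_det (by
    simp only [P, Matrix.det_fin_three, Matrix.of_apply, Matrix.cons_val]
    linear_combination (p * s - q * r) * hN₁' + e1)
  have hQ : IsUnit Q := isUnit_of_det (by
    simp only [Q, Matrix.det_fin_three, Matrix.of_apply, Matrix.cons_val]
    linear_combination e1)
  refine IntoJ3.of_equiv hP hQ (intoJ3_of_normalized (h.equiv hP hQ) ?_ ?_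
    ⟨M₁, hM₁, rfl⟩ ⟨M₂, hM₂, rfl⟩ ?_ ?_ ?_ ?_ ?_ ?_ ?_ ?_ ?_ ?_)
  · rintro _ ⟨M, hM, rfl⟩
    simp [P, Q, Matrix.mul_apply, Matrix.vecMul, dotProduct, Fin.sum_univ_three, h21 M hM, h22 M hM]
  · rintro _ ⟨M, hM, rfl⟩
    simp [P, Q, Matrix.mul_apply, Matrix.vecMul, dotProduct, Fin.sum_univ_three, h21 M hM, h22 M hM]
  all_goals simp only [P, Q, Matrix.mul_apply, Fin.sum_univ_three, Matrix.of_apply,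
    Matrix.cons_val, hg₁, hg₂]
  · ring
  · ring
  · linear_combination (p * s - q * r) * hN₁' + e1
  · ring
  · ring
  · linear_combination (p * s - q * r) * hN₁' + e1
  · linear_combination (p * s - q * r) * hN₁' + e1 + (M₁ 1 1 * q + M₁ 1 2 * s) * e2
      - (M₁ 0 1 * q + M₁ 0 2 * s) * e3
  · linear_combination (M₁ 1 1 * q + M₁ 1 2 * s) * e4 - (M₁ 0 1 * q + M₁ 0 2 * s) * e5
  · linear_combination -(M₁ 1 1 * p + M₁ 1 2 * r) * e2 + (M₁ 0 1 * p + M₁ 0 2 * r) * e3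
  · linear_combination -(M₁ 1 1 * p + M₁ 1 2 * r) * e4 + (M₁ 0 1 * p + M₁ 0 2 * r) * e5

/-! ### Reduction to the final normal form -/

/-- A nonzero row `(r, s)` is the last row of a matrix `[x y; r s]` of determinant one. -/
lemma exists_completion : ∀ r s : ZMod 2, (r, s) ≠ (0, 0) → ∃ x y : ZMod 2, x * s - y * r = 1 := by
  decide

/-- The case where the lower right blocks have a common left null vector `(r, s)`. -/
lemma intoJ3_of_left_null {S : Set Mat3} (h : NonDegenerate S) {r s : ZMod 2}
    (hrs : (r, s) ≠ (0, 0)) (h1 : ∀ M ∈ S, r * M 1 1 + s * M 2 1 = 0)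
    (h2 : ∀ M ∈ S, r * M 1 2 + s * M 2 2 = 0) : IntoJ3 S := by
  obtain ⟨x, y, hxy⟩ := exists_completion r s hrs
  have hP : IsUnit (!![1, 0, 0; 0, x, y; 0, r, s] : Mat3) := isUnit_of_det (by
    simp only [Matrix.det_fin_three, Matrix.of_apply, Matrix.cons_val]
    linear_combination hxy)
  refine IntoJ3.of_equiv hP isUnit_one (intoJ3_of_last_row (h.equiv hP isUnit_one) ?_ ?_)
  · rintro _ ⟨M, hM, rfl⟩
    simpa [Matrix.mul_apply, Matrix.vecMul, dotProduct, Fin.sum_univ_three] using h1 M hM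
  · rintro _ ⟨M, hM, rfl⟩
    simpa [Matrix.mul_apply, Matrix.vecMul, dotProduct, Fin.sum_univ_three] using h2 M hM

/-- If the lower right `2 × 2` blocks of the matrices of an additively closed set are all singular,
then they have a common left null vector or a common right null vector. -/
lemma exists_common_null {S : Set Mat3} (hadd : ∀ X ∈ S, ∀ Y ∈ S, X + Y ∈ S)
    (hsing : ∀ M ∈ S, M 1 1 * M 2 2 - M 1 2 * M 2 1 = 0) :
    ∃ r s : ZMod 2, (r, s) ≠ (0, 0) ∧
      ((∀ M ∈ S, r * M 1 1 + s * M 2 1 = 0 ∧ r * M 1 2 + s * M 2 2 = 0) ∨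
        (∀ M ∈ S, r * M 1 1 + s * M 1 2 = 0 ∧ r * M 2 1 + s * M 2 2 = 0)) := by
  by_cases hzero : ∀ M ∈ S, (M 1 1, M 1 2, M 2 1, M 2 2) = (0, 0, 0, 0)
  · refine ⟨1, 0, by decide, Or.inl fun M hM => ?_⟩
    have := hzero M hM
    simp only [Prod.mk.injEq] at this
    simp [this]
  push Not at hzero
  obtain ⟨D, hD, hne⟩ := hzero
  obtain ⟨r, s, t, u, ⟨hrs, htu⟩, hh⟩ := exists_null_vectors _ _ _ _ (hsing D hD) hne
  let e (i j : Fin 3) := Matrix.entryAddMonoidHom (ZMod 2) i j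
  let m (x : ZMod 2) := AddMonoidHom.mulLeft x
  let f : Mat3 →+ ZMod 2 × ZMod 2 :=
    ((m r).comp (e 1 1) + (m s).comp (e 2 1)).prod ((m r).comp (e 1 2) + (m s).comp (e 2 2))
  let g : Mat3 →+ ZMod 2 × ZMod 2 :=
    ((m t).comp (e 1 1) + (m u).comp (e 1 2)).prod ((m t).comp (e 2 1) + (m u).comp (e 2 2))
  rcases forall_or_of_pointwise hadd f g
    (fun M hM => hh _ _ _ _ (hsing M hM) (hsing _ (hadd D hD M hM))) with hf | hg
  · exact ⟨r, s, hrs, Or.inl fun M hM => Prod.mk.inj (hf M hM)⟩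
  · exact ⟨t, u, htu, Or.inr fun M hM => Prod.mk.inj (hg M hM)⟩

/-- The case where the rank one matrix is `E₀₀`. -/
lemma intoJ3_of_single {S : Set Mat3} (h : NonDegenerate S)
    (hE : (!![1, 0, 0; 0, 0, 0; 0, 0, 0] : Mat3) ∈ S) : IntoJ3 S := by
  have hsing : ∀ M ∈ S, M 1 1 * M 2 2 - M 1 2 * M 2 1 = 0 := by
    intro M hM
    have h0 := h.det M hM
    have h1 := h.det _ (h.add M hM _ hE)
    simp only [Matrix.det_fin_three, Matrix.add_apply, Matrix.of_apply, Matrix.cons_val,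
      add_zero] at h0 h1
    linear_combination h1 - h0
  obtain ⟨r, s, hrs, hl | hr⟩ := exists_common_null h.add hsing
  · exact intoJ3_of_left_null h hrs (fun M hM => (hl M hM).1) (fun M hM => (hl M hM).2)
  · refine IntoJ3.of_transpose (intoJ3_of_left_null h.transpose hrs ?_ ?_)
    · rintro _ ⟨M, hM, rfl⟩
      exact (hr M hM).1
    · rintro _ ⟨M, hM, rfl⟩
      exact (hr M hM).2

lemma exists_unit_mulVec (u : Fin 3 → ZMod 2) (hu : u ≠ 0) :
    ∃ P : Mat3, IsUnit P ∧ P *ᵥ u = ![1, 0, 0] := by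
  have two : (1 + 1 : ZMod 2) = 0 := by decide
  have dbl : ∀ x : ZMod 2, x + x = 0 := by decide
  by_cases h0 : u 0 = 0
  · by_cases h1 : u 1 = 0
    · have h2 : u 2 = 1 := zmod_two_eq_one fun h2 => hu (by
        ext i
        fin_cases i <;> assumption)
      refine ⟨!![0, 0, 1; 0, 1, 0; 1, 0, 0], isUnit_of_det (by decide), ?_⟩
      ext i
      fin_cases i <;> simp [Matrix.mulVec, dotProduct, Fin.sum_univ_three, h0, h1, h2]
    · have h1 := zmod_two_eq_one h1
      refine ⟨!![0, 1, 0; 1, 0, 0; 0, u 2, 1], isUnit_of_det ?_, ?_⟩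
      · simp only [Matrix.det_fin_three, Matrix.of_apply, Matrix.cons_val]
        linear_combination -two
      · ext i
        fin_cases i <;> simp [Matrix.mulVec, dotProduct, Fin.sum_univ_three, h0, h1, dbl]
  · have h0 := zmod_two_eq_one h0
    refine ⟨!![1, 0, 0; u 1, 1, 0; u 2, 0, 1], isUnit_of_det ?_, ?_⟩
    · simp [Matrix.det_fin_three]
    · ext i
      fin_cases i <;> simp [Matrix.mulVec, dotProduct, Fin.sum_univ_three, h0, dbl]

lemma exists_vecMulVec_of_rank_one {M : Mat3} (hM : M.rank = 1) :
    ∃ u v : Fin 3 → ZMod 2, u ≠ 0 ∧ v ≠ 0 ∧ M = Matrix.vecMulVec u v := by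
  obtain ⟨w, hw, hspan⟩ := finrank_eq_one_iff'.mp hM
  choose c hc using fun j : Fin 3 => hspan ⟨M *ᵥ Pi.single j 1, Pi.single j 1, rfl⟩
  have hMeq : M = Matrix.vecMulVec (w : Fin 3 → ZMod 2) c := by
    ext i j
    have := congrFun (congrArg Subtype.val (hc j)) i
    simp at this
    rw [Matrix.vecMulVec_apply, ← this, mul_comm]
  refine ⟨w, c, fun h => hw (Subtype.ext h), ?_, hMeq⟩
  rintro rfl
  have : M = 0 := by
    rw [hMeq]
    ext i j
    simp [Matrix.vecMulVec_apply]
  rw [this, Matrix.rank_zero] at hM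
  exact zero_ne_one hM

lemma intoJ3_of_rank_one {S : Set Mat3} (h : NonDegenerate S) {M : Mat3} (hMS : M ∈ S)
    (hM : M.rank = 1) : IntoJ3 S := by
  obtain ⟨u, v, hu, hv, rfl⟩ := exists_vecMulVec_of_rank_one hM
  obtain ⟨P, hP, hPu⟩ := exists_unit_mulVec u hu
  obtain ⟨Q, hQ, hQv⟩ := exists_unit_mulVec v hv
  have hQ' := isUnit_transpose_mat hQ
  refine IntoJ3.of_equiv hP hQ' (intoJ3_of_single (h.equiv hP hQ') ⟨_, hMS, ?_⟩)
  simp only [Matrix.mul_vecMulVec, Matrix.vecMulVec_mul, Matrix.vecMul_transpose, hPu, hQv]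
  decide

/-! ### Primitive spaces are non-degenerate -/

lemma nonDegenerate_of_primitive {V : Submodule (ZMod 2) Mat3} (hprim : Primitive (ZMod 2) V)
    (hurk : urk V = 2) : NonDegenerate (V : Set Mat3) := by
  obtain ⟨⟨⟨hker, hspan⟩, hcol⟩, hrow⟩ := hprim
  have hequiv : ∀ P Q : Mat3, IsUnit P → IsUnit Q →
      ∃ T : Submodule (ZMod 2) Mat3, MatEquiv (ZMod 2) V T ∧
        ∀ X ∈ T, ∃ M ∈ V, X = P * M * Q := by
    intro P Q hP hQ
    refine ⟨V.map ((LinearMap.mulRight (ZMod 2) Q).comp (LinearMap.mulLeft (ZMod 2) P)),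
      ⟨P, Q, hP, hQ, ?_⟩, ?_⟩
    · ext X
      simp
    · rintro _ ⟨M, hM, rfl⟩
      exact ⟨M, hM, rfl⟩
  refine ⟨fun A hA B hB => V.add_mem hA hB, ?_, ?_, ?_, ?_, ?_⟩
  · intro A hA
    by_contra hdet
    have hunit : IsUnit A := by
      rw [Matrix.isUnit_iff_isUnit_det]
      exact isUnit_iff_ne_zero.mpr hdet
    have h3 : A.rank = 3 := by simpa using Matrix.rank_of_isUnit A hunit
    have hle : A.rank ≤ urk V := by
      refine le_csSup ⟨3, ?_⟩ ⟨A, hA, rfl⟩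
      rintro _ ⟨B, -, rfl⟩
      simpa using B.rank_le_width
    omega
  · intro P Q hP hQ
    by_contra! hc
    -- The functional `y ↦ (P y)₂` vanishes on all column spaces, hence identically.
    let φ : (Fin 3 → ZMod 2) →ₗ[ZMod 2] ZMod 2 := (LinearMap.proj 2).comp P.mulVecLin
    have hle : Submodule.span (ZMod 2)
        {y : Fin 3 → ZMod 2 | ∃ M ∈ V, ∃ x : Fin 3 → ZMod 2, M.mulVec x = y} ≤ φ.ker := by
      rw [Submodule.span_le]
      rintro _ ⟨M, hM, x, rfl⟩
      obtain ⟨Q', hQ'⟩ := hQ.exists_right_inv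
      have hx : P *ᵥ (M *ᵥ x) = (P * M * Q) *ᵥ (Q' *ᵥ x) := by
        simp only [Matrix.mulVec_mulVec, Matrix.mul_assoc, hQ', Matrix.mul_one]
      change (P *ᵥ (M *ᵥ x)) 2 = 0
      rw [hx]
      simp [Matrix.mulVec, dotProduct, hc M hM]
    rw [hspan] at hle
    obtain ⟨P', hP'⟩ := hP.exists_right_inv
    have h2 : φ (P' *ᵥ Pi.single 2 1) = 0 := hle trivial
    have h2' : (P *ᵥ (P' *ᵥ Pi.single 2 1)) 2 = (0 : ZMod 2) := h2
    rw [Matrix.mulVec_mulVec, hP', Matrix.one_mulVec] at h2'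
    simp at h2'
  · intro P Q hP hQ
    by_contra! hc
    obtain ⟨P', hP'⟩ := hP.exists_left_inv
    obtain ⟨Q', hQ'⟩ := hQ.exists_left_inv
    have hx := hker (Q *ᵥ Pi.single 2 1) (by
      intro M hM
      have hx : M *ᵥ (Q *ᵥ Pi.single 2 1) = P' *ᵥ ((P * M * Q) *ᵥ Pi.single 2 1) := by
        simp only [Matrix.mulVec_mulVec, ← Matrix.mul_assoc, hP', Matrix.one_mul]
      have h0 : (P * M * Q) *ᵥ Pi.single 2 1 = 0 := by
        ext i
        simpa using hc M hM i
      rw [hx, h0, Matrix.mulVec_zero])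
    have h2 := congrFun (congrArg Q'.mulVec hx) 2
    rw [Matrix.mulVec_mulVec, hQ', Matrix.one_mulVec, Matrix.mulVec_zero] at h2
    simp at h2
  · intro P Q hP hQ
    by_contra! hc
    obtain ⟨T, hT, hT'⟩ := hequiv P Q hP hQ
    refine hcol ⟨T, hT, fun X hX => ?_⟩
    obtain ⟨M, hM, rfl⟩ := hT' X hX
    obtain ⟨u, v, huv⟩ := hc M hM
    have : dropCol (P * M * Q) = Matrix.vecMulVec u v := by
      ext i j
      exact huv i j
    rw [this, hurk]
    exact Matrix.rank_vecMulVec_le u v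
  · intro P Q hP hQ
    by_contra! hc
    obtain ⟨T, hT, hT'⟩ := hequiv P Q hP hQ
    refine hrow ⟨T, hT, fun X hX => ?_⟩
    obtain ⟨M, hM, rfl⟩ := hT' X hX
    obtain ⟨u, v, huv⟩ := hc M hM
    have : dropRow (P * M * Q) = Matrix.vecMulVec u v := by
      ext i j
      exact huv i j
    rw [this, hurk]
    exact Matrix.rank_vecMulVec_le u v

theorem primitive_with_rank_one_matrix_equiv_subspace_of_J3
    (V : Submodule (ZMod 2) (Matrix (Fin 3) (Fin 3) (ZMod 2)))
    (hprim : Primitive (ZMod 2) V) (hurk : urk V = 2)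
    (hrank1 : ∃ M ∈ V, M.rank = 1) :
    ∃ W : Submodule (ZMod 2) (Matrix (Fin 3) (Fin 3) (ZMod 2)),
      W ≤ J3 ∧ MatEquiv (ZMod 2) V W := by
  obtain ⟨M, hMV, hM⟩ := hrank1
  obtain ⟨P, Q, hP, hQ, hJ⟩ := intoJ3_of_rank_one (nonDegenerate_of_primitive hprim hurk) hMV hM
  refine ⟨V.map ((LinearMap.mulRight (ZMod 2) Q).comp (LinearMap.mulLeft (ZMod 2) P)), ?_,
    P, Q, hP, hQ, ?_⟩
  · rintro _ ⟨X, hX, rfl⟩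
    exact hJ X hX
  · ext X
    simp
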